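/- arXiv:2510.05456 — 6 statements merged into one kernel-verified Lean document; each statement's English description precedes it below -/
import Mathlib

section
/- Let t0 < t1 be reals, let h : ℝ → ℝ be differentiable on [t0, t1], and let α : ℝ → ℝ be a locally Lipschitz class K function. If h(t0) ≥ 0 and h'(t) ≥ -α(h(t)) for all t ∈ [t0, t1], then h(t) ≥ 0 for all t ∈ [t0, t1]. -/
/-!
Where `h` is negative, `α (h t) < α 0 = 0`, so the differential inequality makes `h` strictly
increasing there; hence `h` can never descend through a negative level `-ε`. This is Mathlib's
fencing theorem `image_le_of_deriv_right_lt_deriv_boundary` applied to `-h` and the constant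
barrier `ε`, followed by `ε → 0`.
-/

/-- Comparison lemma for class K functions: if `h(t0) ≥ 0` and `h'(t) ≥ -α(h(t))`
on `[t0, t1]`, then `h(t) ≥ 0` on `[t0, t1]`. -/
theorem stmt_0 (t0 t1 : ℝ) (ht : t0 < t1) (h α : ℝ → ℝ)
    (hdiff : DifferentiableOn ℝ h (Set.Icc t0 t1))
    (hα_cont : Continuous α) (hα_mono : StrictMono α) (hα_zero : α 0 = 0)
    (hα_lip : LocallyLipschitz α)
    (hinit : h t0 ≥ 0)
    (hineq : ∀ t ∈ Set.Icc t0 t1, derivWithin h (Set.Icc t0 t1) t ≥ -α (h t)) :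
    ∀ t ∈ Set.Icc t0 t1, h t ≥ 0 := by
  intro t htmem
  -- Where `h = -ε`, the hypothesis gives `h' ≥ -α (-ε) > 0`, so `-h` cannot cross `ε`.
  have key : ∀ ε > 0, -h t ≤ 0 + ε := by
    intro ε hε
    rw [zero_add]
    refine image_le_of_deriv_right_lt_deriv_boundary (f := fun x => -h x)
      (f' := fun x => -derivWithin h (Set.Icc t0 t1) x) (B := fun _ => ε) (B' := fun _ => 0)
      hdiff.continuousOn.neg ?_ (by linarith) (fun x => hasDerivAt_const x ε) ?_ htmem
    · intro x hx
      exact ((hdiff x (Set.Ico_subset_Icc_self hx)).hasDerivWithinAt.mono_of_mem_nhdsWithin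
        (Icc_mem_nhdsGE_of_mem hx)).neg
    · intro x hx hxε
      have h1 := hineq x (Set.Ico_subset_Icc_self hx)
      have h2 : α (h x) < α 0 := hα_mono (by linarith)
      linarith
  linarith [le_of_forall_pos_le_add key]
end

section
/- Let t0 < t1 be reals, let ρ ≥ 1 be a natural number, let α_1, …, α_ρ : ℝ → ℝ be locally Lipschitz class K functions, and let h_0, …, h_{ρ-1} : ℝ → ℝ be functions differentiable on [t0, t1] satisfying the recursion h_i(t) = h_{i-1}'(t) + α_i(h_{i-1}(t)) for all i ∈ {1, …, ρ-1} and all t ∈ [t0, t1]. Suppose h_{ρ-1}'(t) + α_ρ(h_{ρ-1}(t)) ≥ 0 for all t ∈ [t0, t1], and h_i(t0) ≥ 0 for every i ∈ {0, …, ρ-1}. Then h_i(t) ≥ 0 for every i ∈ {0, …, ρ-1} and every t ∈ [t0, t1]. -/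
/-!
Wherever `h_i` is negative, the inequality `h_i' + α_{i+1}(h_i) ≥ 0` forces `h_i' > 0`, because
`α_{i+1}` is negative on negative reals. Hence `h_i` can never cross a level `-ε < 0` downwards,
and letting `ε → 0` gives `h_i ≥ 0` (`nonneg_of_barrier`). Descending induction on `i`, starting
from the highest-order inequality, then yields the theorem: nonnegativity of `h_{i+1}` is exactly
the barrier inequality for `h_i`.
-/

/-- First-order barrier lemma, with `a` only required to be negative on the negative reals. -/
lemma nonneg_of_barrier {t0 t1 : ℝ} {g a : ℝ → ℝ} (ha : ∀ x < 0, a x < 0)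
    (hg : DifferentiableOn ℝ g (Set.Icc t0 t1))
    (hbar : ∀ t ∈ Set.Icc t0 t1, 0 ≤ derivWithin g (Set.Icc t0 t1) t + a (g t))
    (h0 : 0 ≤ g t0) : ∀ t ∈ Set.Icc t0 t1, 0 ≤ g t := by
  intro t ht
  refine le_of_forall_pos_le_add fun ε hε => ?_
  -- Compare `-g` with the constant `ε`: on contact, `g = -ε`, so `-g` is strictly decreasing.
  have key : -g t ≤ ε := by
    refine image_le_of_deriv_right_lt_deriv_boundary (f := fun s => -g s)
      (f' := fun s => -derivWithin g (Set.Icc t0 t1) s) (B := fun _ => ε) (B' := fun _ => 0)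
      hg.continuousOn.neg ?_ (by linarith) (fun x => hasDerivAt_const x ε) ?_ ht
    · intro x hx
      exact ((hg x (Set.Ico_subset_Icc_self hx)).hasDerivWithinAt.mono_of_mem_nhdsWithin
        (Icc_mem_nhdsGE_of_mem hx)).neg
    · intro x hx hxε
      have h1 := hbar x (Set.Ico_subset_Icc_self hx)
      have h2 := ha (g x) (by linarith)
      linarith
  linarith

/-- Trajectory-wise HOCBF theorem: with auxiliary functions
`h_i = h_{i-1}' + α_i ∘ h_{i-1}` (for `i ∈ {1,…,ρ-1}`), the highest-order barrier
inequality `h_{ρ-1}' + α_ρ(h_{ρ-1}) ≥ 0` together with `h_i(t0) ≥ 0` for all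
`i ∈ {0,…,ρ-1}` forces `h_i(t) ≥ 0` on `[t0, t1]` for all such `i`. -/
theorem stmt_1 (t0 t1 : ℝ) (ht : t0 < t1) (ρ : ℕ) (hρ : 1 ≤ ρ)
    (α : ℕ → ℝ → ℝ) (h : ℕ → ℝ → ℝ)
    (hα : ∀ i, 1 ≤ i → i ≤ ρ →
      Continuous (α i) ∧ StrictMono (α i) ∧ α i 0 = 0 ∧ LocallyLipschitz (α i))
    (hdiff : ∀ i < ρ, DifferentiableOn ℝ (h i) (Set.Icc t0 t1))
    (hrec : ∀ i, 1 ≤ i → i < ρ → ∀ t ∈ Set.Icc t0 t1,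
      h i t = derivWithin (h (i - 1)) (Set.Icc t0 t1) t + α i (h (i - 1) t))
    (htop : ∀ t ∈ Set.Icc t0 t1,
      derivWithin (h (ρ - 1)) (Set.Icc t0 t1) t + α ρ (h (ρ - 1) t) ≥ 0)
    (hinit : ∀ i < ρ, h i t0 ≥ 0) :
    ∀ i < ρ, ∀ t ∈ Set.Icc t0 t1, h i t ≥ 0 := by
  have hneg : ∀ i, 1 ≤ i → i ≤ ρ → ∀ x < 0, α i x < 0 := by
    intro i hi hiρ x hx
    obtain ⟨-, hmono, hzero, -⟩ := hα i hi hiρ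
    exact hzero ▸ hmono hx
  have main : ∀ k i, i + k + 1 = ρ → ∀ t ∈ Set.Icc t0 t1, h i t ≥ 0 := by
    intro k
    induction k with
    | zero =>
      intro i hi
      obtain rfl : i = ρ - 1 := by omega
      exact nonneg_of_barrier (hneg ρ hρ le_rfl) (hdiff _ (by omega)) htop (hinit _ (by omega))
    | succ k ih =>
      intro i hi
      refine nonneg_of_barrier (hneg (i + 1) (by omega) (by omega)) (hdiff i (by omega)) ?_
        (hinit i (by omega))
      intro t ht'
      have h1 := ih (i + 1) (by omega) t ht'
      rwa [hrec (i + 1) (by omega) (by omega) t ht', Nat.add_sub_cancel] at h1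
  intro i hi
  exact main (ρ - 1 - i) i (by omega)
end

section
/- Let E = ℝⁿ (a real finite-dimensional inner product space), let f : E → E, let g : E → (ℝᵐ →ₗ E), let h : E → ℝ be differentiable, and let α : ℝ → ℝ be a locally Lipschitz class K function. Define H(z, u) = Dh(z)[f(z) + g(z)u] + α(h(z)), where Dh(z) denotes the Fréchet derivative of h at z. Fix a < b, a set R ⊆ E, a set Uadm ⊆ ℝᵐ, and u_k ∈ Uadm. Let x : [a, b] → E be differentiable with x'(t) = f(x(t)) + g(x(t))u_k for all t ∈ [a, b], and suppose x(t) ∈ R for all t ∈ [a, b]. Suppose the set { H(z, u) - H(x(a), u) : z ∈ R, u ∈ Uadm } is nonempty and bounded below with infimum φ, that H(x(a), u_k) + φ ≥ 0, and that h(x(a)) ≥ 0. Then h(x(t)) ≥ 0 for all t ∈ [a, b]. -/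
/-!
Along the trajectory put `y t = h (x t)`. Taking `z = x t`, `u = uk` in the set defining `φ` gives
`H (x t) uk ≥ H (x a) uk + φ ≥ 0`, i.e. `deriv y t ≥ -α (y t)`. Since `α` is negative on negative
reals, `y` is strictly increasing wherever it is negative, so it can never reach a level `-r < 0`
from `y a ≥ 0`. This is the fencing theorem `image_le_of_deriv_right_lt_deriv_boundary` applied to
`-y` and each constant barrier `r > 0`.
-/

/-- Sampled-data CBF result for relative degree one: for the control-affine system
`ẋ = f(x) + g(x)u` with zero-order-hold input `u_k` on `[a, b]`, the compensated
barrier inequality at the sampling instant `a` keeps `h` nonnegative on `[a, b]`. -/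
theorem stmt_3 {n m : ℕ}
    (f : EuclideanSpace ℝ (Fin n) → EuclideanSpace ℝ (Fin n))
    (g : EuclideanSpace ℝ (Fin n) →
      (EuclideanSpace ℝ (Fin m) →ₗ[ℝ] EuclideanSpace ℝ (Fin n)))
    (h : EuclideanSpace ℝ (Fin n) → ℝ) (hdiff : Differentiable ℝ h)
    (α : ℝ → ℝ) (hα_cont : Continuous α) (hα_mono : StrictMono α) (hα_zero : α 0 = 0)
    (hα_lip : LocallyLipschitz α)
    (H : EuclideanSpace ℝ (Fin n) → EuclideanSpace ℝ (Fin m) → ℝ)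
    (hH : ∀ z u, H z u = fderiv ℝ h z (f z + g z u) + α (h z))
    (a b : ℝ) (hab : a < b)
    (R : Set (EuclideanSpace ℝ (Fin n))) (Uadm : Set (EuclideanSpace ℝ (Fin m)))
    (uk : EuclideanSpace ℝ (Fin m)) (huk : uk ∈ Uadm)
    (x : ℝ → EuclideanSpace ℝ (Fin n))
    (hx : ∀ t ∈ Set.Icc a b,
      HasDerivWithinAt x (f (x t) + g (x t) uk) (Set.Icc a b) t)
    (hxR : ∀ t ∈ Set.Icc a b, x t ∈ R)
    (Φ : Set ℝ) (hΦ : Φ = {d : ℝ | ∃ z ∈ R, ∃ u ∈ Uadm, d = H z u - H (x a) u})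
    (hne : Φ.Nonempty) (hbdd : BddBelow Φ) (φ : ℝ) (hφ : φ = sInf Φ)
    (hcond : H (x a) uk + φ ≥ 0) (hinit : h (x a) ≥ 0) :
    ∀ t ∈ Set.Icc a b, h (x t) ≥ 0 := by
  have hy : ∀ t ∈ Set.Icc a b, HasDerivWithinAt (fun s => h (x s))
      (fderiv ℝ h (x t) (f (x t) + g (x t) uk)) (Set.Icc a b) t := fun t ht =>
    (hdiff (x t)).hasFDerivAt.comp_hasDerivWithinAt t (hx t ht)
  have hHnonneg : ∀ t ∈ Set.Icc a b, 0 ≤ H (x t) uk := by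
    intro t ht
    have hle : φ ≤ H (x t) uk - H (x a) uk := by
      rw [hφ]
      refine csInf_le hbdd ?_
      rw [hΦ]
      exact ⟨x t, hxR t ht, uk, huk, rfl⟩
    linarith
  intro t ht
  refine neg_nonpos.mp (le_of_forall_pos_le_add fun r hr => ?_)
  rw [zero_add]
  refine image_le_of_deriv_right_lt_deriv_boundary
    (f := fun s => -h (x s)) (f' := fun s => -fderiv ℝ h (x s) (f (x s) + g (x s) uk))
    (B := fun _ => r) (B' := fun _ => 0)
    (fun s hs => (hy s hs).continuousWithinAt.neg) (fun s hs => ?_) ?_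
    (fun s => hasDerivAt_const s r) (fun s hs hsr => ?_) ht
  · exact ((hy s (Set.Ico_subset_Icc_self hs)).mono_of_mem_nhdsWithin
      (Icc_mem_nhdsGE_of_mem hs)).neg
  · linarith
  · have hneg : h (x s) < 0 := by
      have : -h (x s) = r := hsr
      linarith
    have hα_neg : α (h (x s)) < 0 := hα_zero ▸ hα_mono hneg
    have hHs := hHnonneg s (Set.Ico_subset_Icc_self hs)
    rw [hH] at hHs
    change -fderiv ℝ h (x s) (f (x s) + g (x s) uk) < 0
    linarith
end

section
/- Let E = ℝⁿ, let f : E → E, let g : E → (ℝᵐ →ₗ E), let ρ ≥ 1, and let α_1, …, α_ρ : ℝ → ℝ be locally Lipschitz class K functions. Let h_0 : E → ℝ and recursively define h_i(z) = Dh_{i-1}(z)[f(z)] + α_i(h_{i-1}(z)) for i ∈ {1, …, ρ-1}, assuming each h_i (i ∈ {0, …, ρ-1}) is differentiable. Assume the relative degree condition: Dh_i(z)[g(z)u] = 0 for every z ∈ E, every u ∈ ℝᵐ, and every i ∈ {0, …, ρ-2}. Define H(z, u) = Dh_{ρ-1}(z)[f(z) + g(z)u] + α_ρ(h_{ρ-1}(z)).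 Fix T > 0, a sampling state x_k ∈ E, a set R ⊆ E, a set Uadm ⊆ ℝᵐ, and u_k ∈ Uadm. Let x : [0, T] → E be differentiable with x(0) = x_k and x'(t) = f(x(t)) + g(x(t))u_k for all t ∈ [0, T], and suppose x(t) ∈ R for all t ∈ [0, T]. Suppose the set { H(z, u) - H(x_k, u) : z ∈ R, u ∈ Uadm } is nonempty and bounded below with infimum φ, that H(x_k, u_k) + φ ≥ 0, and that h_i(x_k) ≥ 0 for every i ∈ {0, …, ρ-1}. Then h_i(x(t)) ≥ 0 for every i ∈ {0, …, ρ-1} and every t ∈ [0, T]. -/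
/-!
The scalar fact behind the theorem: if `v 0 ≥ 0` and `v' + a(v) ≥ 0` with `a` negative on the
negative half-line, then `v ≥ 0` (`nonneg_of_deriv_add_nonneg`). Along the trajectory this is applied
to `v t = h i (x t)` by descending induction on `i`. For `i = ρ - 1`, the quantity
`v' + α_ρ(v)` equals `H (x t) uk`, which is at least `H xk uk + φ ≥ 0` because `x t ∈ R`. For
smaller `i`, the relative degree condition removes the input from `v'`, so that
`v' + α_{i+1}(v)` equals `h (i + 1) (x t)`, nonnegative by induction.
-/

/-- Scalar comparison principle. Whenever `v` equals a level `-ε < 0`, its derivative is strictly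
positive, so `v` cannot cross that level downwards. -/
theorem nonneg_of_deriv_add_nonneg {T : ℝ} {a v v' : ℝ → ℝ} (ha : ∀ s < 0, a s < 0)
    (hv : ∀ t ∈ Set.Icc (0 : ℝ) T, HasDerivWithinAt v (v' t) (Set.Icc (0 : ℝ) T) t)
    (hv0 : 0 ≤ v 0) (hineq : ∀ t ∈ Set.Icc (0 : ℝ) T, 0 ≤ v' t + a (v t)) :
    ∀ t ∈ Set.Icc (0 : ℝ) T, 0 ≤ v t := by
  intro t ht
  refine le_of_forall_pos_le_add fun ε hε => ?_
  have key : -v t ≤ ε := by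
    refine image_le_of_deriv_right_lt_deriv_boundary (f := fun s => -v s) (f' := fun s => -v' s)
      (B := fun _ => ε) (B' := fun _ => 0) (a := 0) (b := T) ?_ ?_ ?_ ?_ ?_ ht
    · exact fun s hs => (hv s hs).continuousWithinAt.neg
    · intro s hs
      refine HasDerivWithinAt.fun_neg ?_
      exact (hv s ⟨hs.1, hs.2.le⟩).mono_of_mem_nhdsWithin
        (Filter.mem_of_superset (Icc_mem_nhdsGE hs.2) (Set.Icc_subset_Icc_left hs.1))
    · linarith
    · exact fun s => hasDerivAt_const s ε
    · intro s hs hsε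
      have hneg := ha (v s) (by linarith)
      have := hineq s ⟨hs.1, hs.2.le⟩
      linarith
  linarith

/-- Sampled-data HOCBF theorem over one sampling interval: for `ẋ = f(x) + g(x)u`
with zero-order-hold input `u_k` on `[0, T]`, a safety function `h_0` of relative
degree `ρ` with auxiliary functions `h_i(z) = Dh_{i-1}(z)[f(z)] + α_i(h_{i-1}(z))`,
and a compensation term `φ` computed over the reachable set `R`, the compensated
highest-order barrier inequality at the sampling instant keeps all `h_i` nonnegative
over the whole interval. -/
theorem stmt_4 {n m : ℕ}
    (f : EuclideanSpace ℝ (Fin n) → EuclideanSpace ℝ (Fin n))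
    (g : EuclideanSpace ℝ (Fin n) →
      (EuclideanSpace ℝ (Fin m) →ₗ[ℝ] EuclideanSpace ℝ (Fin n)))
    (ρ : ℕ) (hρ : 1 ≤ ρ) (α : ℕ → ℝ → ℝ)
    (hα : ∀ i, 1 ≤ i → i ≤ ρ →
      Continuous (α i) ∧ StrictMono (α i) ∧ α i 0 = 0 ∧ LocallyLipschitz (α i))
    (h : ℕ → EuclideanSpace ℝ (Fin n) → ℝ)
    (hrec : ∀ i, 1 ≤ i → i < ρ → ∀ z,
      h i z = fderiv ℝ (h (i - 1)) z (f z) + α i (h (i - 1) z))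
    (hdiff : ∀ i < ρ, Differentiable ℝ (h i))
    (hreldeg : ∀ i, i + 2 ≤ ρ → ∀ z u, fderiv ℝ (h i) z (g z u) = 0)
    (H : EuclideanSpace ℝ (Fin n) → EuclideanSpace ℝ (Fin m) → ℝ)
    (hH : ∀ z u, H z u = fderiv ℝ (h (ρ - 1)) z (f z + g z u) + α ρ (h (ρ - 1) z))
    (T : ℝ) (hT : 0 < T) (xk : EuclideanSpace ℝ (Fin n))
    (R : Set (EuclideanSpace ℝ (Fin n))) (Uadm : Set (EuclideanSpace ℝ (Fin m)))
    (uk : EuclideanSpace ℝ (Fin m)) (huk : uk ∈ Uadm)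
    (x : ℝ → EuclideanSpace ℝ (Fin n)) (hx0 : x 0 = xk)
    (hx : ∀ t ∈ Set.Icc (0 : ℝ) T,
      HasDerivWithinAt x (f (x t) + g (x t) uk) (Set.Icc (0 : ℝ) T) t)
    (hxR : ∀ t ∈ Set.Icc (0 : ℝ) T, x t ∈ R)
    (Φ : Set ℝ) (hΦ : Φ = {d : ℝ | ∃ z ∈ R, ∃ u ∈ Uadm, d = H z u - H xk u})
    (hne : Φ.Nonempty) (hbdd : BddBelow Φ) (φ : ℝ) (hφ : φ = sInf Φ)
    (hcond : H xk uk + φ ≥ 0) (hinit : ∀ i < ρ, h i xk ≥ 0) :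
    ∀ i < ρ, ∀ t ∈ Set.Icc (0 : ℝ) T, h i (x t) ≥ 0 := by
  subst hx0
  have hderiv : ∀ i < ρ, ∀ t ∈ Set.Icc (0 : ℝ) T,
      HasDerivWithinAt (fun s => h i (x s)) (fderiv ℝ (h i) (x t) (f (x t) + g (x t) uk))
        (Set.Icc (0 : ℝ) T) t := fun i hi t ht =>
    ((hdiff i hi (x t)).hasFDerivAt).comp_hasDerivWithinAt t (hx t ht)
  have hαneg : ∀ i, 1 ≤ i → i ≤ ρ → ∀ s < 0, α i s < 0 := fun i h1 h2 s hs => by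
    obtain ⟨-, hmono, hzero, -⟩ := hα i h1 h2
    exact hzero ▸ hmono hs
  have hHnonneg : ∀ t ∈ Set.Icc (0 : ℝ) T, 0 ≤ H (x t) uk := fun t ht => by
    have hle : sInf Φ ≤ H (x t) uk - H (x 0) uk :=
      csInf_le hbdd (hΦ ▸ ⟨x t, hxR t ht, uk, huk, rfl⟩)
    linarith
  -- Descending induction on `i`, written as induction on `j = ρ - 1 - i`.
  have main : ∀ j i, i + j + 1 = ρ → ∀ t ∈ Set.Icc (0 : ℝ) T, 0 ≤ h i (x t) := by
    intro j
    induction j with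
    | zero =>
      intro i hi
      obtain rfl : ρ = i + 1 := by omega
      refine nonneg_of_deriv_add_nonneg (hαneg (i + 1) (by omega) le_rfl)
        (hderiv i (by omega)) (hinit i (by omega)) fun t ht => ?_
      have := hHnonneg t ht
      rwa [hH, Nat.add_sub_cancel] at this
    | succ j ih =>
      intro i hi
      refine nonneg_of_deriv_add_nonneg (hαneg (i + 1) (by omega) (by omega))
        (hderiv i (by omega)) (hinit i (by omega)) fun t ht => ?_
      have := ih (i + 1) (by omega) t ht
      rw [hrec (i + 1) (by omega) (by omega), Nat.add_sub_cancel] at this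
      rwa [map_add, hreldeg i (by omega), add_zero]
  exact fun i hi => main (ρ - 1 - i) i (by omega)
end

section
/- Let E = ℝⁿ, let f : E → E, let g : E → (ℝᵐ →ₗ E), let ρ ≥ 1, and let α_1, …, α_ρ : ℝ → ℝ be locally Lipschitz class K functions. Let h_0 : E → ℝ and recursively define h_i(z) = Dh_{i-1}(z)[f(z)] + α_i(h_{i-1}(z)) for i ∈ {1, …, ρ-1}, assuming each h_i (i ∈ {0, …, ρ-1}) is differentiable, and assume Dh_i(z)[g(z)u] = 0 for every z ∈ E, u ∈ ℝᵐ, and i ∈ {0, …, ρ-2}. Define H(z, u) = Dh_{ρ-1}(z)[f(z) + g(z)u] + α_ρ(h_{ρ-1}(z)). Fix T > 0, a set Uadm ⊆ ℝᵐ, a sequence of inputs u : ℕ → Uadm, and a continuous trajectory x : ℝ → E such that for every k ∈ ℕ, x is differentiable on [kT, (k+1)T] with x'(t) = f(x(t)) + g(x(t))u_k there. Suppose for every k ∈ ℕ there is a set R_k ⊆ E with x(t) ∈ R_k for all t ∈ [kT, (k+1)T], such that the set { H(z, u) - H(x(kT), u) : z ∈ R_k, u ∈ Uadm } is nonempty and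 bounded below with infimum φ_k, and H(x(kT), u_k) + φ_k ≥ 0. If h_i(x(0)) ≥ 0 for every i ∈ {0, …, ρ-1}, then h_i(x(t)) ≥ 0 for every i ∈ {0, …, ρ-1} and every t ≥ 0. -/
/-!
At each time `t ≥ 0` the trajectory has a right derivative, driven by the input `u k` of the
sampling interval `[kT, (k+1)T)` containing `t`, and since `x t ∈ R k` the infimum defining `φ k`
gives `H (x t) (u k) ≥ H (x (kT)) (u k) + φ k ≥ 0`. Sampling instants need no separate treatment
because only right derivatives are used.

Along the trajectory `y = h i ∘ x` thus satisfies a scalar inequality `y' + α (y) ≥ 0` for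
`i = ρ - 1`, and, by the recursion and the vanishing of `Dh_i [g u]`, also for `i < ρ - 1` as soon
as `h (i + 1) ∘ x ≥ 0`. Such an inequality keeps `y` nonnegative
(`nonneg_of_right_deriv_barrier`), so the claim follows by descending induction on `i`.
-/

/-- A scalar barrier principle for right derivatives. Only the sign of `α` on the negative axis
matters: where `y < 0` the inequality `y' + α (y) ≥ 0` forces `y' ≥ 0`. -/
theorem nonneg_of_right_deriv_barrier {y y' : ℝ → ℝ} {α : ℝ → ℝ}
    (hα : ∀ s < 0, α s ≤ 0) (hy : Continuous y)
    (hy' : ∀ t, 0 ≤ t → HasDerivWithinAt y (y' t) (Set.Ici t) t)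
    (hineq : ∀ t, 0 ≤ t → 0 ≤ y' t + α (y t)) (h0 : 0 ≤ y 0) :
    ∀ t, 0 ≤ t → 0 ≤ y t := by
  intro b hb
  -- `-y` cannot cross the strictly increasing positive line `s ↦ ε (1 + s)`; then let `ε → 0`.
  have key : ∀ ε > 0, -y b ≤ ε * (1 + b) := by
    intro ε hε
    refine image_le_of_deriv_right_lt_deriv_boundary' (f := fun s => -y s)
      (f' := fun s => -y' s) (B := fun s => ε * (1 + s)) (B' := fun _ => ε) (a := 0) (b := b)
      hy.neg.continuousOn (fun s hs => (hy' s hs.1).neg) ?_ (by fun_prop) ?_ ?_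
      (Set.right_mem_Icc.2 hb)
    · simp only [add_zero, mul_one]
      linarith
    · intro s _
      simpa using (((hasDerivAt_id s).const_add 1).const_mul ε).hasDerivWithinAt
    · intro s hs hsB
      have hpos : 0 < ε * (1 + s) := mul_pos hε (by linarith [hs.1])
      have hneg : y s < 0 := by linarith
      have := hineq s hs.1
      have := hα _ hneg
      linarith
  by_contra hlt
  have hlt : y b < 0 := not_le.1 hlt
  have h1b : 0 < 1 + b := by linarith
  have := key (-y b / (2 * (1 + b))) (div_pos (by linarith) (by linarith))
  have e : -y b / (2 * (1 + b)) * (1 + b) = -y b / 2 := by field_simp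
  linarith

/-- Forward invariance for the closed loop with SdHOCBF constraints: on each
sampling interval `[kT, (k+1)T]` the zero-order-hold input `u k` satisfies the
compensated highest-order barrier inequality at the sampling instant (with
compensation `φ k` computed over a reachable set `R k`), so the trajectory stays
in the intersection of the zero-superlevel sets of `h_0, …, h_{ρ-1}` for all
`t ≥ 0`, provided it starts there. -/
theorem stmt_6 {n m : ℕ}
    (f : EuclideanSpace ℝ (Fin n) → EuclideanSpace ℝ (Fin n))
    (g : EuclideanSpace ℝ (Fin n) →
      (EuclideanSpace ℝ (Fin m) →ₗ[ℝ] EuclideanSpace ℝ (Fin n)))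
    (ρ : ℕ) (hρ : 1 ≤ ρ) (α : ℕ → ℝ → ℝ)
    (hα : ∀ i, 1 ≤ i → i ≤ ρ →
      Continuous (α i) ∧ StrictMono (α i) ∧ α i 0 = 0 ∧ LocallyLipschitz (α i))
    (h : ℕ → EuclideanSpace ℝ (Fin n) → ℝ)
    (hrec : ∀ i, 1 ≤ i → i < ρ → ∀ z,
      h i z = fderiv ℝ (h (i - 1)) z (f z) + α i (h (i - 1) z))
    (hdiff : ∀ i < ρ, Differentiable ℝ (h i))
    (hreldeg : ∀ i, i + 2 ≤ ρ → ∀ z u, fderiv ℝ (h i) z (g z u) = 0)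
    (H : EuclideanSpace ℝ (Fin n) → EuclideanSpace ℝ (Fin m) → ℝ)
    (hH : ∀ z u, H z u = fderiv ℝ (h (ρ - 1)) z (f z + g z u) + α ρ (h (ρ - 1) z))
    (T : ℝ) (hT : 0 < T)
    (Uadm : Set (EuclideanSpace ℝ (Fin m)))
    (u : ℕ → EuclideanSpace ℝ (Fin m)) (hu : ∀ k, u k ∈ Uadm)
    (x : ℝ → EuclideanSpace ℝ (Fin n)) (hxcont : Continuous x)
    (hx : ∀ k : ℕ, ∀ t ∈ Set.Icc ((k : ℝ) * T) (((k : ℝ) + 1) * T),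
      HasDerivWithinAt x (f (x t) + g (x t) (u k))
        (Set.Icc ((k : ℝ) * T) (((k : ℝ) + 1) * T)) t)
    (R : ℕ → Set (EuclideanSpace ℝ (Fin n)))
    (hxR : ∀ k : ℕ, ∀ t ∈ Set.Icc ((k : ℝ) * T) (((k : ℝ) + 1) * T), x t ∈ R k)
    (Φ : ℕ → Set ℝ)
    (hΦ : ∀ k, Φ k = {d : ℝ | ∃ z ∈ R k, ∃ w ∈ Uadm, d = H z w - H (x (k * T)) w})
    (hne : ∀ k, (Φ k).Nonempty) (hbdd : ∀ k, BddBelow (Φ k))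
    (φ : ℕ → ℝ) (hφ : ∀ k, φ k = sInf (Φ k))
    (hcond : ∀ k : ℕ, H (x (k * T)) (u k) + φ k ≥ 0)
    (hinit : ∀ i < ρ, h i (x 0) ≥ 0) :
    ∀ i < ρ, ∀ t ≥ (0 : ℝ), h i (x t) ≥ 0 := by
  -- The right derivative of `x` at `t`, with the barrier inequality for the input active there.
  have hright : ∀ t, ∃ k : ℕ, 0 ≤ t →
      HasDerivWithinAt x (f (x t) + g (x t) (u k)) (Set.Ici t) t ∧ 0 ≤ H (x t) (u k) := by
    intro t
    refine ⟨⌊t / T⌋₊, fun ht => ?_⟩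
    set k := ⌊t / T⌋₊
    have hk1 : (k : ℝ) * T ≤ t := (le_div_iff₀ hT).1 (Nat.floor_le (div_nonneg ht hT.le))
    have hk2 : t < ((k : ℝ) + 1) * T := (div_lt_iff₀ hT).1 (Nat.lt_floor_add_one _)
    have hmem : t ∈ Set.Icc ((k : ℝ) * T) (((k : ℝ) + 1) * T) := ⟨hk1, hk2.le⟩
    constructor
    · have hIcc := (hx k t hmem).mono (Set.Icc_subset_Icc_left hk1)
      exact hIcc.mono_of_mem_nhdsWithin (Icc_mem_nhdsGE hk2)
    · have hle : φ k ≤ H (x t) (u k) - H (x (k * T)) (u k) := by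
        rw [hφ k]
        refine csInf_le (hbdd k) ?_
        rw [hΦ k]
        exact ⟨x t, hxR k t hmem, u k, hu k, rfl⟩
      linarith [hcond k]
  choose k hk using hright
  -- The barrier principle applied to `h i ∘ x`.
  have step : ∀ i < ρ,
      (∀ t, 0 ≤ t → 0 ≤ fderiv ℝ (h i) (x t) (f (x t) + g (x t) (u (k t)))
        + α (i + 1) (h i (x t))) → ∀ t, 0 ≤ t → 0 ≤ h i (x t) := by
    intro i hi hineq
    obtain ⟨-, hmono, hzero, -⟩ := hα (i + 1) (by omega) (by omega)
    refine nonneg_of_right_deriv_barrier (y := fun t => h i (x t)) (α := α (i + 1))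
      (fun s hs => hzero ▸ (hmono hs).le) ((hdiff i hi).continuous.comp hxcont)
      (fun t ht => ?_) hineq (hinit i hi)
    exact ((hdiff i hi) (x t)).hasFDerivAt.comp_hasDerivWithinAt t (hk t ht).1
  have main : ∀ j < ρ, ∀ t, 0 ≤ t → 0 ≤ h (ρ - 1 - j) (x t) := by
    intro j
    induction j with
    | zero =>
      intro _
      refine step _ (by omega) fun t ht => ?_
      have hHt := (hk t ht).2
      rw [hH] at hHt
      simpa [Nat.sub_add_cancel hρ] using hHt
    | succ j ih =>
      intro hj
      refine step _ (by omega) fun t ht => ?_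
      have hnext := ih (by omega) t ht
      have e : ρ - 1 - j = ρ - 1 - (j + 1) + 1 := by omega
      rw [e, hrec _ (by omega) (by omega), Nat.add_sub_cancel] at hnext
      rw [map_add, hreldeg _ (by omega), add_zero]
      exact hnext
  intro i hi t ht
  have hmain := main (ρ - 1 - i) (by omega) t ht
  rwa [show ρ - 1 - (ρ - 1 - i) = i by omega] at hmain
end

section
/- Let E = ℝ³ with the Euclidean inner product, let D : E →ₗ E be a linear map, let c ∈ E and r ∈ ℝ, and let p, v, a, j : ℝ → E be differentiable functions and s : ℝ → E a function such that p' = v, v' = -D v + a, a' = j, and j' = s. Define h(t) = ‖p(t) - c‖² - r². Then h is three times differentiable with h'(t) = 2⟨p(t) - c, v(t)⟩, h''(t) = 2‖v(t)‖² + 2⟨p(t) - c, a(t) - D v(t)⟩, and h'''(t) = 6⟨v(t), a(t) - D v(t)⟩ + 2⟨p(t) - c, j(t) - D(a(t) - D v(t))⟩; in particular, h', h'', and h''' do not involve the input s. Moreover, if s is continuous then h is four times differentiable with h''''(t) = 6‖a(t) - D v(t)‖² + 8⟨v(t), j(t) - D(a(t) - D v(t))⟩ + 2⟨p(t) - c,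 s(t) - D j(t) + D²(a(t) - D v(t))⟩, which contains the term 2⟨p(t) - c, s(t)⟩ involving the input. -/
/-!
With `q = p - c` and the acceleration `w = a - D v`, the dynamics read `q' = v`, `v' = w`,
`w' = j - D w`, `w'' = s - D j + D² w`. The four formulas are then the Leibniz rule for the
inner product applied successively to `‖q‖²`; the input `s` enters only through `w''`, which
first occurs in the fourth derivative.
-/

open RealInnerProductSpace

/-- Relative degree 4 of the obstacle safety function `h = ‖p - c‖² - r²` along the
augmented dynamics `p' = v`, `v' = -Dv + a`, `a' = j`, `j' = s`: the first three
derivatives of `h` have the stated closed forms not involving `s`, and (for `s`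
continuous) the fourth derivative contains the input term `2⟨p - c, s⟩`. -/
theorem stmt_12 (D : EuclideanSpace ℝ (Fin 3) →ₗ[ℝ] EuclideanSpace ℝ (Fin 3))
    (c : EuclideanSpace ℝ (Fin 3)) (r : ℝ)
    (p v a j s : ℝ → EuclideanSpace ℝ (Fin 3))
    (hp : ∀ t, HasDerivAt p (v t) t)
    (hv : ∀ t, HasDerivAt v (-D (v t) + a t) t)
    (ha : ∀ t, HasDerivAt a (j t) t)
    (hj : ∀ t, HasDerivAt j (s t) t)
    (h : ℝ → ℝ) (hh : ∀ t, h t = ‖p t - c‖ ^ 2 - r ^ 2) :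
    (∀ t, HasDerivAt h (2 * ⟪p t - c, v t⟫) t) ∧
    (∀ t, HasDerivAt (fun t => 2 * ⟪p t - c, v t⟫)
      (2 * ‖v t‖ ^ 2 + 2 * ⟪p t - c, a t - D (v t)⟫) t) ∧
    (∀ t, HasDerivAt (fun t => 2 * ‖v t‖ ^ 2 + 2 * ⟪p t - c, a t - D (v t)⟫)
      (6 * ⟪v t, a t - D (v t)⟫ + 2 * ⟪p t - c, j t - D (a t - D (v t))⟫) t) ∧
    (Continuous s →
      ∀ t, HasDerivAt
        (fun t => 6 * ⟪v t, a t - D (v t)⟫ + 2 * ⟪p t - c, j t - D (a t - D (v t))⟫)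
        (6 * ‖a t - D (v t)‖ ^ 2 + 8 * ⟪v t, j t - D (a t - D (v t))⟫ +
          2 * ⟪p t - c, s t - D (j t) + D (D (a t - D (v t)))⟫) t) := by
  -- On a finite-dimensional space `D` is continuous, so it commutes with differentiation.
  have hD : ∀ {f : ℝ → EuclideanSpace ℝ (Fin 3)} {f' : EuclideanSpace ℝ (Fin 3)} {t : ℝ},
      HasDerivAt f f' t → HasDerivAt (fun t => D (f t)) (D f') t := fun {_ _ t} hf =>
    (LinearMap.toContinuousLinearMap D).hasFDerivAt.comp_hasDerivAt t hf
  have hq : ∀ t, HasDerivAt (fun t => p t - c) (v t) t := fun t => (hp t).sub_const c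
  have hv' : ∀ t, HasDerivAt v (a t - D (v t)) t := fun t => by
    simpa only [neg_add_eq_sub] using hv t
  -- The acceleration `w = a - D v` satisfies `w' = j - D w` and `w'' = s - D j + D² w`.
  have hw : ∀ t, HasDerivAt (fun t => a t - D (v t)) (j t - D (a t - D (v t))) t :=
    fun t => (ha t).sub (hD (hv' t))
  have hw' : ∀ t, HasDerivAt (fun t => j t - D (a t - D (v t)))
      (s t - D (j t) + D (D (a t - D (v t)))) t := fun t => by
    refine ((hj t).sub (hD (hw t))).congr_deriv ?_
    rw [map_sub D (j t)]
    abel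
  refine ⟨fun t => ?_, fun t => ?_, fun t => ?_, fun _ t => ?_⟩
  · rw [funext hh]
    exact (hq t).norm_sq.sub_const _
  · refine (((hq t).inner ℝ (hv' t)).const_mul 2).congr_deriv ?_
    rw [real_inner_self_eq_norm_sq]
    ring
  · refine (((hv' t).norm_sq.const_mul 2).add
      (((hq t).inner ℝ (hw t)).const_mul 2)).congr_deriv ?_
    ring
  · refine ((((hv' t).inner ℝ (hw t)).const_mul 6).add
      (((hq t).inner ℝ (hw' t)).const_mul 2)).congr_deriv ?_
    rw [real_inner_self_eq_norm_sq]
    ring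
end
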